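/- For i, j, k ∈ {1,…,n} with i ≠ n, j ∉ {i, i+1}, and k ∉ {j, i, i+1}, the following identities of operators on L hold: T_i·e_{i,i+1}·T_i = e_{i+1,i} + (τ^{−1}−τ)(q−q^{−1})^{−1}·(T^{−1})^+_{i+1,n−1}·(Y_n − Y_n^{−1})·T^-_{n−1,i}; T_i·e_{ij}·T_i = e_{i+1,j}; T_i·e_{j,i+1}·T_i = e_{ji}; and e_{jk}·T_i = T_i·e_{jk}. -/

import Mathlib

noncomputable section

/-- The Laurent polynomial ring `R[X₁^{±1}, …, Xₙ^{±1}]` in `n` variables over `R`,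
realised as the monoid algebra of the additive monoid `Fin n →₀ ℤ` of exponent vectors. -/
abbrev Laur (R : Type*) [CommRing R] (n : ℕ) : Type _ :=
  AddMonoidAlgebra R (Fin n →₀ ℤ)

variable {R : Type*} [CommRing R] {n : ℕ}

/-- The monomial `c · X^a`. -/
def mono (a : Fin n →₀ ℤ) (c : R) : Laur R n := AddMonoidAlgebra.single a c

/-- The generator `X_i`. -/
def Xel (i : Fin n) : Laur R n := mono (Finsupp.single i 1) 1

/-- The element `X_i⁻¹`. -/
def XinvEl (i : Fin n) : Laur R n := mono (Finsupp.single i (-1)) 1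

/-- Multiplication by a Laurent polynomial, as a linear endomorphism. -/
def mulOp (x : Laur R n) : Module.End R (Laur R n) := LinearMap.mulLeft R x

/-- The operator of multiplication by `X_i`, with `ℕ`-indexing (`0`-based; junk value `1`
out of range). -/
def XOp (i : ℕ) : Module.End R (Laur R n) :=
  if h : i < n then mulOp (Xel ⟨i, h⟩) else 1

/-- The operator of multiplication by `X_i⁻¹`, with `ℕ`-indexing. -/
def XinvOp (i : ℕ) : Module.End R (Laur R n) :=
  if h : i < n then mulOp (XinvEl ⟨i, h⟩) else 1

/-- Ascending product `f s * f (s+1) * ⋯ * f (s+len-1)` (equal to `1` when `len = 0`). -/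
def aF {M : Type*} [Monoid M] (f : ℕ → M) (s len : ℕ) : M :=
  ((List.range' s len).map f).prod

/-- Descending product `f (s+len-1) * ⋯ * f (s+1) * f s` (equal to `1` when `len = 0`). -/
def dF {M : Type*} [Monoid M] (f : ℕ → M) (s len : ℕ) : M :=
  (((List.range' s len).map f).reverse).prod

/-- Integer power `u^z`, where `v` is a designated (two-sided) inverse of `u`. -/
def zpowOp {M : Type*} [Monoid M] (u v : M) (z : ℤ) : M :=
  if 0 ≤ z then u ^ z.toNat else v ^ (-z).toNat

/-! ### Products of sequences -/

lemma aF_succ {M : Type*} [Monoid M] (f : ℕ → M) (s len : ℕ) :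
    aF f s (len + 1) = f s * aF f (s + 1) len := by
  simp [aF, List.range'_succ]

lemma dF_succ {M : Type*} [Monoid M] (f : ℕ → M) (s len : ℕ) :
    dF f s (len + 1) = dF f (s + 1) len * f s := by
  simp [dF, List.range'_succ]

lemma aF_commute {M : Type*} [Monoid M] (f : ℕ → M) (x : M) (len : ℕ) : ∀ s : ℕ,
    (∀ l, s ≤ l → l < s + len → Commute x (f l)) → Commute x (aF f s len) := by
  induction len with
  | zero => intro s _; simp [aF]
  | succ m ih =>
    intro s h
    rw [aF_succ]
    exact (h s le_rfl (by omega)).mul_right (ih (s + 1) fun l h1 h2 => h l (by omega) (by omega))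

lemma dF_commute {M : Type*} [Monoid M] (f : ℕ → M) (x : M) (len : ℕ) : ∀ s : ℕ,
    (∀ l, s ≤ l → l < s + len → Commute x (f l)) → Commute x (dF f s len) := by
  induction len with
  | zero => intro s _; simp [dF]
  | succ m ih =>
    intro s h
    rw [dF_succ]
    exact (ih (s + 1) fun l h1 h2 => h l (by omega) (by omega)).mul_right (h s le_rfl (by omega))

/-- Moving `f (i+1)` through an ascending product of `g`'s. -/
lemma aF_shift {M : Type*} [Monoid M] (f g : ℕ → M) (N : ℕ)
    (hb : ∀ l, l + 1 < N → f (l + 1) * (g l * g (l + 1)) = g l * g (l + 1) * f l)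
    (hc : ∀ l m, l < N → m < N → (l + 1 < m ∨ m + 1 < l) → Commute (f l) (g m))
    (len : ℕ) : ∀ s i : ℕ, s ≤ i → i + 1 < s + len → s + len ≤ N →
      f (i + 1) * aF g s len = aF g s len * f i := by
  induction len with
  | zero => intro s i h1 h2; omega
  | succ m ih =>
    intro s i h1 h2 h3
    rcases Nat.eq_or_lt_of_le h1 with h | h
    · subst h
      obtain ⟨k, rfl⟩ : ∃ k, m = k + 1 := ⟨m - 1, by omega⟩
      rw [aF_succ, aF_succ]
      have hcomm : Commute (f s) (aF g (s + 1 + 1) k) :=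
        aF_commute _ _ _ _ fun l h4 h5 => hc s l (by omega) (by omega) (by omega)
      calc f (s + 1) * (g s * (g (s + 1) * aF g (s + 1 + 1) k))
          = f (s + 1) * (g s * g (s + 1)) * aF g (s + 1 + 1) k := by simp only [mul_assoc]
        _ = g s * g (s + 1) * (f s * aF g (s + 1 + 1) k) := by
            rw [hb s (by omega)]; simp only [mul_assoc]
        _ = _ := by rw [hcomm.eq]; simp only [mul_assoc]
    · rw [aF_succ, ← mul_assoc, (hc (i + 1) s (by omega) (by omega) (by omega)).eq, mul_assoc,
        ih (s + 1) i (by omega) (by omega) (by omega), mul_assoc]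

/-- Moving `f i` through a descending product of `f`'s. -/
lemma dF_shift {M : Type*} [Monoid M] (f : ℕ → M) (N : ℕ)
    (hb : ∀ l, l + 1 < N → f l * (f (l + 1) * f l) = f (l + 1) * f l * f (l + 1))
    (hc : ∀ l m, l < N → m < N → (l + 1 < m ∨ m + 1 < l) → Commute (f l) (f m))
    (len : ℕ) : ∀ s i : ℕ, s ≤ i → i + 1 < s + len → s + len ≤ N →
      f i * dF f s len = dF f s len * f (i + 1) := by
  induction len with
  | zero => intro s i h1 h2; omega
  | succ m ih =>
    intro s i h1 h2 h3
    rcases Nat.eq_or_lt_of_le h1 with h | h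
    · subst h
      obtain ⟨k, rfl⟩ : ∃ k, m = k + 1 := ⟨m - 1, by omega⟩
      rw [dF_succ, dF_succ]
      have hcomm : Commute (f s) (dF f (s + 1 + 1) k) :=
        dF_commute _ _ _ _ fun l h4 h5 => hc s l (by omega) (by omega) (by omega)
      calc f s * (dF f (s + 1 + 1) k * f (s + 1) * f s)
          = f s * dF f (s + 1 + 1) k * (f (s + 1) * f s) := by simp only [mul_assoc]
        _ = dF f (s + 1 + 1) k * (f s * (f (s + 1) * f s)) := by
            rw [hcomm.eq]; simp only [mul_assoc]
        _ = _ := by rw [hb s (by omega)]; simp only [mul_assoc]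
    · rw [dF_succ, ← mul_assoc, ih (s + 1) i (by omega) (by omega) (by omega), mul_assoc,
        (hc (i + 1) s (by omega) (by omega) (by omega)).eq, ← mul_assoc]

/-! ### Abstract Demazure–Lusztig operators on a domain -/

section DL

variable {F L : Type*} [Field F] [CommRing L] [IsDomain L] [Algebra F L]

/-- The defining equation of a Demazure–Lusztig operator. -/
def IsDL (τ : F) (s : L →ₐ[F] L) (x y : L) (T : L → L) : Prop :=
  ∀ p, (y - x) * T p = (τ⁻¹ • y - τ • x) * s p + (τ - τ⁻¹) • (y * p)

lemma IsDL.map {τ : F} {s : L →ₐ[F] L} {x y : L} {T : L → L} (h : IsDL τ s x y T)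
    (w : L →ₐ[F] L) (hne : w y - w x ≠ 0) (p : L) :
    algebraMap L (FractionRing L) (w (T p)) =
      ((algebraMap F (FractionRing L) τ⁻¹ * algebraMap L (FractionRing L) (w y)
        - algebraMap F (FractionRing L) τ * algebraMap L (FractionRing L) (w x))
          * algebraMap L (FractionRing L) (w (s p))
        + (algebraMap F (FractionRing L) τ - algebraMap F (FractionRing L) τ⁻¹)
          * (algebraMap L (FractionRing L) (w y) * algebraMap L (FractionRing L) (w p)))
      / (algebraMap L (FractionRing L) (w y) - algebraMap L (FractionRing L) (w x)) := by
  have hne' : algebraMap L (FractionRing L) (w y) - algebraMap L (FractionRing L) (w x) ≠ 0 := by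
    rw [← map_sub]
    intro h0
    exact hne ((IsFractionRing.injective L (FractionRing L)) (by rw [h0, map_zero]))
  rw [eq_div_iff hne', mul_comm]
  have := congrArg (fun t => algebraMap L (FractionRing L) (w t)) (h p)
  simp only [map_mul, map_add, map_sub, Algebra.smul_def, AlgHom.commutes,
    ← IsScalarTower.algebraMap_apply F L (FractionRing L)] at this
  rw [this]

lemma IsDL.braid {τ : F} {s1 s2 : L →ₐ[F] L} {x y z : L} {T1 T2 : L → L}
    (h1 : IsDL τ s1 x y T1) (h2 : IsDL τ s2 y z T2)
    (hxy : y - x ≠ 0) (hyz : z - y ≠ 0) (hxz : z - x ≠ 0)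
    (s1x : s1 x = y) (s1y : s1 y = x) (s1z : s1 z = z)
    (s2x : s2 x = x) (s2y : s2 y = z) (s2z : s2 z = y)
    (s11 : ∀ p, s1 (s1 p) = p) (s22 : ∀ p, s2 (s2 p) = p)
    (sb : ∀ p, s1 (s2 (s1 p)) = s2 (s1 (s2 p))) (p : L) :
    T1 (T2 (T1 p)) = T2 (T1 (T2 p)) := by
  have hyx : x - y ≠ 0 := by rw [← neg_sub]; exact neg_ne_zero.2 hxy
  have hzy : y - z ≠ 0 := by rw [← neg_sub]; exact neg_ne_zero.2 hyz
  have hzx : x - z ≠ 0 := by rw [← neg_sub]; exact neg_ne_zero.2 hxz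
  have a1 := fun p => h1.map (AlgHom.id F L) (by simpa using hxy) p
  have a2 := fun p => h2.map (AlgHom.id F L) (by simpa using hyz) p
  have a11 := fun p => h1.map s1 (by rw [s1x, s1y]; exact hyx) p
  have a12 := fun p => h2.map s1 (by rw [s1z, s1y]; exact hxz) p
  have a21 := fun p => h1.map s2 (by rw [s2x, s2y]; exact hxz) p
  have a22 := fun p => h2.map s2 (by rw [s2z, s2y]; exact hzy) p
  have a121 := fun p => h1.map (s1.comp s2) (by simp only [AlgHom.comp_apply, s2x, s2y, s1x, s1z]; exact hyz) p
  have a212 := fun p => h2.map (s2.comp s1) (by simp only [AlgHom.comp_apply, s1y, s1z, s2x, s2z]; exact hxy) p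
  simp only [AlgHom.comp_apply, AlgHom.id_apply, s1x, s1y, s1z, s2x, s2y, s2z] at a1 a2 a11 a12 a21 a22 a121 a212
  apply IsFractionRing.injective L (FractionRing L)
  have inj : ∀ a b : L, a - b ≠ 0 →
      algebraMap L (FractionRing L) a - algebraMap L (FractionRing L) b ≠ 0 := by
    intro a b hab h0
    rw [← map_sub] at h0
    exact hab ((IsFractionRing.injective L (FractionRing L)) (by rw [h0, map_zero]))
  have i1 := inj _ _ hxy
  have i2 := inj _ _ hyz
  have i3 := inj _ _ hxz
  have i4 := inj _ _ hyx
  have i5 := inj _ _ hzy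
  have i6 := inj _ _ hzx
  simp only [a1, a2, a11, a12, a21, a22, a121, a212, s11, s22, sb]
  generalize algebraMap L (FractionRing L) x = x at *
  generalize algebraMap L (FractionRing L) y = y at *
  generalize algebraMap L (FractionRing L) z = z at *
  generalize algebraMap F (FractionRing L) τ = t at *
  generalize algebraMap F (FractionRing L) τ⁻¹ = t' at *
  rw [show x - y = -(y - x) by ring, show y - z = -(z - y) by ring]
  field_simp
  ring

lemma IsDL.comm {τ : F} {s1 s2 : L →ₐ[F] L} {x y z u : L} {T1 T2 : L → L}
    (h1 : IsDL τ s1 x y T1) (h2 : IsDL τ s2 z u T2)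
    (hxy : y - x ≠ 0) (hzu : u - z ≠ 0)
    (s1z : s1 z = z) (s1u : s1 u = u)
    (s2x : s2 x = x) (s2y : s2 y = y)
    (sb : ∀ p, s1 (s2 p) = s2 (s1 p)) (p : L) :
    T1 (T2 p) = T2 (T1 p) := by
  have a1 := fun p => h1.map (AlgHom.id F L) (by simpa using hxy) p
  have a2 := fun p => h2.map (AlgHom.id F L) (by simpa using hzu) p
  have a12 := fun p => h2.map s1 (by rw [s1z, s1u]; exact hzu) p
  have a21 := fun p => h1.map s2 (by rw [s2x, s2y]; exact hxy) p
  simp only [AlgHom.id_apply, s1z, s1u, s2x, s2y] at a1 a2 a12 a21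
  apply IsFractionRing.injective L (FractionRing L)
  have inj : ∀ a b : L, a - b ≠ 0 →
      algebraMap L (FractionRing L) a - algebraMap L (FractionRing L) b ≠ 0 := by
    intro a b hab h0
    rw [← map_sub] at h0
    exact hab ((IsFractionRing.injective L (FractionRing L)) (by rw [h0, map_zero]))
  have i1 := inj _ _ hxy
  have i2 := inj _ _ hzu
  simp only [a1, a2, a12, a21, sb]
  field_simp
  ring

/-- Demazure–Lusztig operators commute with multiplication by invariants. -/
lemma IsDL.mul_inv {τ : F} {s : L →ₐ[F] L} {x y : L} {T : L → L} (h : IsDL τ s x y T)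
    (hxy : y - x ≠ 0) (u : L) (hu : s u = u) (p : L) : T (u * p) = u * T p := by
  apply mul_left_cancel₀ hxy
  have e1 := h (u * p)
  have e2 := h p
  rw [map_mul, hu] at e1
  simp only [Algebra.smul_def] at e1 e2 ⊢
  linear_combination e1 - u * e2

/-- `T X_k = X_{k+1} T⁻¹`. -/
lemma IsDL.mul_x {τ : F} {s : L →ₐ[F] L} {x y : L} {T : L → L} (h : IsDL τ s x y T)
    (hxy : y - x ≠ 0) (hx : s x = y) (p : L) : T (x * p) = y * (T p + (τ⁻¹ - τ) • p) := by
  apply mul_left_cancel₀ hxy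
  have e1 := h (x * p)
  have e2 := h p
  rw [map_mul, hx] at e1
  simp only [Algebra.smul_def, map_sub] at e1 e2 ⊢
  linear_combination e1 - y * e2

end DL

/-! ### The permutation action and the cyclic shift on Laurent polynomials -/

/-- The algebra automorphism permuting variables. -/
def sig (F : Type*) [Field F] {n : ℕ} (w : Equiv.Perm (Fin n)) : Laur F n →ₐ[F] Laur F n :=
  AddMonoidAlgebra.mapDomainAlgHom F F
    ((Finsupp.domCongr w : (Fin n →₀ ℤ) ≃+ (Fin n →₀ ℤ)) : (Fin n →₀ ℤ) →+ (Fin n →₀ ℤ))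

lemma sig_mono {F : Type*} [Field F] {n : ℕ} (w : Equiv.Perm (Fin n)) (a : Fin n →₀ ℤ) (c : F) :
    sig F w (mono a c) = mono (Finsupp.equivMapDomain w a) c := by
  simp [sig, mono, Finsupp.domCongr]

lemma lin_ext {F : Type*} [Field F] {n : ℕ} {f g : Laur F n →ₗ[F] Laur F n}
    (h : ∀ a c, f (mono a c) = g (mono a c)) : f = g := by
  apply AddMonoidAlgebra.lhom_ext'
  intro a
  refine LinearMap.ext_ring ?_
  exact h a 1

lemma sig_Xel {F : Type*} [Field F] {n : ℕ} (w : Equiv.Perm (Fin n)) (i : Fin n) :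
    sig F w (Xel i) = Xel (w i) := by
  rw [Xel, sig_mono, Finsupp.equivMapDomain_single, Xel]

lemma sig_XinvEl {F : Type*} [Field F] {n : ℕ} (w : Equiv.Perm (Fin n)) (i : Fin n) :
    sig F w (XinvEl i) = XinvEl (w i) := by
  rw [XinvEl, sig_mono, Finsupp.equivMapDomain_single, XinvEl]

lemma sig_mul {F : Type*} [Field F] {n : ℕ} (w v : Equiv.Perm (Fin n)) (p : Laur F n) :
    sig F w (sig F v p) = sig F (w * v) p := by
  have : (sig F w).toLinearMap ∘ₗ (sig F v).toLinearMap = (sig F (w * v)).toLinearMap := by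
    apply lin_ext
    intro a c
    simp only [LinearMap.comp_apply, AlgHom.toLinearMap_apply, sig_mono]
    rw [← Finsupp.equivMapDomain_trans]
    rfl
  exact congrArg (fun f => f p) this

lemma sig_one {F : Type*} [Field F] {n : ℕ} (p : Laur F n) : sig F 1 p = p := by
  have : (sig F (1 : Equiv.Perm (Fin n))).toLinearMap = LinearMap.id := by
    apply lin_ext
    intro a c
    simp only [AlgHom.toLinearMap_apply, sig_mono, LinearMap.id_apply]
    congr 1
    exact Finsupp.equivMapDomain_refl a
  exact congrArg (fun f => f p) this

lemma Xel_sub_ne {F : Type*} [Field F] {n : ℕ} {i j : Fin n} (h : i ≠ j) :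
    (Xel i : Laur F n) - Xel j ≠ 0 := by
  rw [sub_ne_zero]
  intro h0
  have h1 : (Finsupp.single i (1 : ℤ) : Fin n →₀ ℤ) = Finsupp.single j 1 :=
    AddMonoidAlgebra.single_left_injective (one_ne_zero (α := F)) h0
  exact h (Finsupp.single_left_injective one_ne_zero h1)

instance laurDomain (F : Type*) [Field F] (n : ℕ) : IsDomain (Laur F n) := by
  have : NoZeroDivisors (Laur F n) := inferInstance
  exact NoZeroDivisors.to_isDomain _

/-- Relations for moving `T_i` through the elements `e_{jk}`
(indices `0`-based: the paper's conditions `i ≠ n`, `j ∉ {i, i+1}`, `k ∉ {j, i, i+1}`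
become `i + 1 < n`, etc.). -/
theorem statement9
    (F : Type*) [Field F] (n : ℕ) [NeZero n]
    (q τ : F) (hq : q ≠ 0) (hqroot : ∀ m : ℕ, m ≠ 0 → q ^ m ≠ 1) (hτ : τ ≠ 0)
    -- the action of the symmetric group permuting the variables
    (W : Equiv.Perm (Fin n) → Module.End F (Laur F n))
    (hW : ∀ (w : Equiv.Perm (Fin n)) (a : Fin n →₀ ℤ) (c : F),
      W w (mono a c) = mono (Finsupp.equivMapDomain w a) c)
    -- the Demazure–Lusztig operators `T_k` and their inverses `Ti k = T k + τ⁻¹ - τ`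
    (T Ti : ℕ → Module.End F (Laur F n))
    (hT : ∀ (k : ℕ) (hk : k + 1 < n) (p : Laur F n),
      (Xel ⟨k + 1, hk⟩ - Xel ⟨k, Nat.lt_of_succ_lt hk⟩) * T k p
        = (τ⁻¹ • Xel ⟨k + 1, hk⟩ - τ • Xel ⟨k, Nat.lt_of_succ_lt hk⟩)
            * W (Equiv.swap ⟨k, Nat.lt_of_succ_lt hk⟩ ⟨k + 1, hk⟩) p
          + (τ - τ⁻¹) • (Xel ⟨k + 1, hk⟩ * p))
    (hTi : ∀ k, Ti k = T k + (τ⁻¹ - τ) • (1 : Module.End F (Laur F n)))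
    (hTinv : ∀ k, k + 1 < n → T k * Ti k = 1 ∧ Ti k * T k = 1)
    -- the operator `π⁻¹`
    (piInv : Module.End F (Laur F n))
    (hpiInv : ∀ (a : Fin n →₀ ℤ) (c : F),
      piInv (mono a c)
        = q ^ (a 0) • mono (Finsupp.equivMapDomain (finRotate n).symm a) c)
    -- the operators `Y_i = T_i ⋯ T_{n-1} ⬝ π⁻¹ ⬝ T_1⁻¹ ⋯ T_{i-1}⁻¹` and their inverses
    (Y Yi : ℕ → Module.End F (Laur F n))
    (hY : ∀ i, Y i = aF T i (n - 1 - i) * piInv * aF Ti 0 i)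
    (hYinv : ∀ i, i < n → Y i * Yi i = 1 ∧ Yi i * Y i = 1)
    -- the `q`-Dunkl-type operators `D_i`
    (D : ℕ → Module.End F (Laur F n))
    (hD : ∀ i, D i = aF T i (n - 1 - i)
        * ((q - q⁻¹)⁻¹ • (XinvOp (n - 1) * (Y (n - 1) - Yi (n - 1))))
        * dF T i (n - 1 - i))
    -- the operators `e_{ij} = X_i · D_j`
    (e : ℕ → ℕ → Module.End F (Laur F n))
    (he : ∀ i j, e i j = XOp i * D j)
    :
    (∀ i : ℕ, (hi : i + 1 < n) →
      T i * e i (i + 1) * T i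
        = e (i + 1) i + ((τ⁻¹ - τ) * (q - q⁻¹)⁻¹) •
            (aF Ti (i + 1) (n - 2 - i) * (Y (n - 1) - Yi (n - 1)) * dF T i (n - 1 - i))) ∧
    (∀ i j : ℕ, i + 1 < n → j < n → j ≠ i → j ≠ i + 1 →
      T i * e i j * T i = e (i + 1) j) ∧
    (∀ i j : ℕ, i + 1 < n → j < n → j ≠ i → j ≠ i + 1 →
      T i * e j (i + 1) * T i = e j i) ∧
    (∀ i j k : ℕ, i + 1 < n → j < n → k < n → j ≠ i → j ≠ i + 1 → k ≠ i → k ≠ i + 1 → k ≠ j →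
      e j k * T i = T i * e j k) := by
  have hWs : ∀ w p, W w p = sig F w p := by
    intro w p
    have : W w = (sig F w).toLinearMap := by
      apply lin_ext
      intro a c
      rw [hW, AlgHom.toLinearMap_apply, sig_mono]
    rw [this]; rfl
  have hDL : ∀ (k : ℕ) (hk : k + 1 < n),
      IsDL τ (sig F (Equiv.swap ⟨k, Nat.lt_of_succ_lt hk⟩ ⟨k + 1, hk⟩))
        (Xel ⟨k, Nat.lt_of_succ_lt hk⟩) (Xel ⟨k + 1, hk⟩) (T k) := by
    intro k hk p
    rw [← hWs]
    exact hT k hk p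
  have hne : ∀ (k : ℕ) (hk : k + 1 < n),
      (Xel ⟨k + 1, hk⟩ : Laur F n) - Xel ⟨k, Nat.lt_of_succ_lt hk⟩ ≠ 0 := by
    intro k hk
    apply Xel_sub_ne
    simp
  have hsw : ∀ (a b c : Fin n), c ≠ a → c ≠ b → sig F (Equiv.swap a b) (Xel c) = Xel c := by
    intro a b c h1 h2
    rw [sig_Xel, Equiv.swap_apply_of_ne_of_ne h1 h2]
  have hbraid : ∀ l, l + 2 < n → T l * (T (l + 1) * T l) = T (l + 1) * (T l * T (l + 1)) := by
    intro l hl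
    refine LinearMap.ext fun p => ?_
    refine (hDL l (by omega)).braid (hDL (l + 1) hl) (hne _ _) (hne _ _)
      (Xel_sub_ne (by simp; omega)) ?_ ?_ ?_ ?_ ?_ ?_ ?_ ?_ ?_ p
    · rw [sig_Xel, Equiv.swap_apply_left]
    · rw [sig_Xel, Equiv.swap_apply_right]
    · exact hsw _ _ _ (by simp; omega) (by simp)
    · exact hsw _ _ _ (by simp) (by simp; omega)
    · rw [sig_Xel, Equiv.swap_apply_left]
    · rw [sig_Xel, Equiv.swap_apply_right]
    · intro p; rw [sig_mul, Equiv.swap_mul_self, sig_one]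
    · intro p; rw [sig_mul, Equiv.swap_mul_self, sig_one]
    · intro p
      rw [sig_mul, sig_mul, sig_mul, sig_mul]
      congr 2
      have hperm : ∀ a b c : Fin n, a ≠ b → a ≠ c → b ≠ c →
          Equiv.swap a b * Equiv.swap b c * Equiv.swap a b
            = Equiv.swap b c * Equiv.swap a b * Equiv.swap b c := by
        intro a b c hab hac hbc
        rw [Equiv.swap_mul_swap_mul_swap hab hac, Equiv.swap_comm a b, Equiv.swap_comm b c,
          Equiv.swap_mul_swap_mul_swap hbc.symm hac.symm, Equiv.swap_comm]
      exact hperm _ _ _ (by simp) (by simp; omega) (by simp)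
  have hfar' : ∀ l m, l + 1 < m → m + 1 < n → Commute (T l) (T m) := by
    intro l m hlm hm
    refine LinearMap.ext fun p => ?_
    refine (hDL l (by omega)).comm (hDL m hm) (hne _ _) (hne _ _) ?_ ?_ ?_ ?_ ?_ p
    · exact hsw _ _ _ (by simp; omega) (by simp; omega)
    · exact hsw _ _ _ (by simp; omega) (by simp; omega)
    · exact hsw _ _ _ (by simp; omega) (by simp; omega)
    · exact hsw _ _ _ (by simp; omega) (by simp; omega)
    · intro p
      rw [sig_mul, sig_mul]
      congr 1
      congr 1
      apply Equiv.Perm.Disjoint.commute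
      apply Equiv.Perm.disjoint_swap_swap
      simp
      omega
  have hfar : ∀ l m, l < n - 1 → m < n - 1 → (l + 1 < m ∨ m + 1 < l) → Commute (T l) (T m) := by
    intro l m h1 h2 h
    rcases h with h | h
    · exact hfar' l m h (by omega)
    · exact (hfar' m l h (by omega)).symm
  have hpiX : ∀ (k : ℕ) (hk : k + 1 < n) (p : Laur F n),
      piInv (Xel ⟨k + 1, hk⟩ * p) = Xel ⟨k, Nat.lt_of_succ_lt hk⟩ * piInv p := by
    intro k hk p
    have : piInv * mulOp (Xel ⟨k + 1, hk⟩) = mulOp (Xel ⟨k, Nat.lt_of_succ_lt hk⟩) * piInv := by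
      apply lin_ext
      intro a c
      simp only [Module.End.mul_apply, mulOp, LinearMap.mulLeft_apply, hpiInv]
      have e1 : ∀ (b d : Fin n →₀ ℤ) (c : F), mono b 1 * mono d c = mono (b + d) c := by
        intro b d c
        simp [mono, AddMonoidAlgebra.single_mul_single]
      rw [mul_smul_comm]
      unfold Xel
      rw [e1, e1, hpiInv]
      have e0 : (Finsupp.single (⟨k + 1, hk⟩ : Fin n) (1 : ℤ) + a) 0 = a 0 := by
        rw [Finsupp.add_apply, Finsupp.single_apply, if_neg, zero_add]
        intro h
        have := congrArg Fin.val h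
        simp at this
      rw [e0]
      congr 2
      ext j
      rw [Finsupp.equivMapDomain_apply, Finsupp.add_apply, Finsupp.add_apply,
        Finsupp.equivMapDomain_apply, Equiv.symm_symm]
      congr 1
      rw [Finsupp.single_apply, Finsupp.single_apply]
      have hrot : finRotate n ⟨k, Nat.lt_of_succ_lt hk⟩ = ⟨k + 1, hk⟩ := by
        obtain ⟨m, rfl⟩ : ∃ m, n = m + 1 := ⟨n - 1, by omega⟩
        exact finRotate_of_lt (by omega)
      rw [← hrot]
      simp only [EmbeddingLike.apply_eq_iff_eq]
    exact congrArg (fun f => f p) this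
  have hpiS : ∀ (k : ℕ) (hk : k + 2 < n) (p : Laur F n),
      sig F (Equiv.swap ⟨k, by omega⟩ ⟨k + 1, by omega⟩) (piInv p)
        = piInv (sig F (Equiv.swap ⟨k + 1, by omega⟩ ⟨k + 1 + 1, hk⟩) p) := by
    intro k hk p
    have : (sig F (Equiv.swap (⟨k, by omega⟩ : Fin n) ⟨k + 1, by omega⟩)).toLinearMap * piInv
        = piInv * (sig F (Equiv.swap ⟨k + 1, by omega⟩ ⟨k + 1 + 1, hk⟩)).toLinearMap := by
      apply lin_ext
      intro a c
      simp only [Module.End.mul_apply, AlgHom.toLinearMap_apply, hpiInv, map_smul, sig_mono]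
      have e0 : (Equiv.swap (⟨k + 1, by omega⟩ : Fin n) ⟨k + 1 + 1, hk⟩).symm 0 = 0 := by
        rw [Equiv.symm_swap]
        apply Equiv.swap_apply_of_ne_of_ne
        · intro h
          have := congrArg Fin.val h
          simp at this
        · intro h
          have := congrArg Fin.val h
          simp at this
      rw [Finsupp.equivMapDomain_apply, e0]
      congr 2
      rw [← Finsupp.equivMapDomain_trans, ← Finsupp.equivMapDomain_trans]
      congr 1
      have hrot : ∀ (j : ℕ) (hj : j + 1 < n), (finRotate n).symm ⟨j + 1, hj⟩
          = ⟨j, Nat.lt_of_succ_lt hj⟩ := by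
        intro j hj
        rw [Equiv.symm_apply_eq]
        obtain ⟨m, rfl⟩ : ∃ m, n = m + 1 := ⟨n - 1, by omega⟩
        exact (finRotate_of_lt (by omega)).symm
      rw [← hrot k (by omega), ← hrot (k + 1) (by omega)]
      ext j
      simp only [Equiv.trans_apply]
      rw [Equiv.swap_apply_apply]
      simp
    exact congrArg (fun f => f p) this
  have hpiT : ∀ k, k + 2 < n → T k * piInv = piInv * T (k + 1) := by
    intro k hk
    refine LinearMap.ext fun p => ?_
    apply mul_left_cancel₀ (hne k (by omega))
    have e1 := hDL k (by omega) (piInv p)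
    have e2 := congrArg piInv (hDL (k + 1) hk p)
    rw [hpiS k hk] at e1
    simp only [sub_mul, map_sub, map_add, map_smul, smul_mul_assoc, hpiX] at e1 e2
    simp only [Module.End.mul_apply, sub_mul]
    rw [e1, e2]
  have hTX : ∀ k, k + 1 < n → T k * XOp k = XOp (k + 1) * Ti k := by
    intro k hk
    refine LinearMap.ext fun p => ?_
    have := (hDL k hk).mul_x (hne k hk) (by rw [sig_Xel, Equiv.swap_apply_left]) p
    simpa [XOp, hk, Nat.lt_of_succ_lt hk, mulOp, hTi] using this
  have hXT : ∀ k, k + 1 < n → XOp k * T k = Ti k * XOp (k + 1) := by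
    intro k hk
    calc XOp k * T k = Ti k * (T k * XOp k) * T k := by
          rw [← mul_assoc (Ti k), (hTinv k hk).2, one_mul]
      _ = Ti k * XOp (k + 1) * (Ti k * T k) := by rw [hTX k hk]; simp only [mul_assoc]
      _ = _ := by rw [(hTinv k hk).2, mul_one]
  have hTXc : ∀ k j, k + 1 < n → j < n → j ≠ k → j ≠ k + 1 → Commute (T k) (XOp j) := by
    intro k j hk hj h1 h2
    refine LinearMap.ext fun p => ?_
    have := (hDL k hk).mul_inv (hne k hk) (Xel ⟨j, hj⟩)
      (hsw _ _ _ (by simpa using h1) (by simpa using h2)) p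
    simpa [XOp, hj, mulOp] using this
  have hTXic : ∀ k j, k + 1 < n → j < n → j ≠ k → j ≠ k + 1 → Commute (T k) (XinvOp j) := by
    intro k j hk hj h1 h2
    refine LinearMap.ext fun p => ?_
    have := (hDL k hk).mul_inv (hne k hk) (XinvEl ⟨j, hj⟩)
      (by rw [sig_XinvEl, Equiv.swap_apply_of_ne_of_ne (by simpa using h1) (by simpa using h2)]) p
    simpa [XinvOp, hj, mulOp] using this
  have hXXi : (XOp (n - 1) * XinvOp (n - 1) : Module.End F (Laur F n)) = 1 := by
    have hn : n - 1 < n := Nat.sub_lt (Nat.pos_of_ne_zero (NeZero.ne n)) one_pos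
    refine LinearMap.ext fun p => ?_
    simp only [XOp, XinvOp, hn, dite_true, mulOp, Module.End.mul_apply, LinearMap.mulLeft_apply,
      Module.End.one_apply, ← mul_assoc]
    have : (Xel ⟨n - 1, hn⟩ * XinvEl ⟨n - 1, hn⟩ : Laur F n) = 1 := by
      simp only [Xel, XinvEl, mono, AddMonoidAlgebra.single_mul_single, ← Finsupp.single_add]
      simp [AddMonoidAlgebra.one_def]
    rw [this, one_mul]
  -- `T_k` commutes with `Ti_m` for far indices, and the mixed braid relation
  have hfarTi : ∀ l m, l < n - 1 → m < n - 1 → (l + 1 < m ∨ m + 1 < l) →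
      Commute (T l) (Ti m) := by
    intro l m h1 h2 h
    rw [hTi]
    exact (hfar l m h1 h2 h).add_right ((Commute.one_right _).smul_right _)
  have hbrTi : ∀ l, l + 1 < n - 1 →
      T (l + 1) * (Ti l * Ti (l + 1)) = Ti l * Ti (l + 1) * T l := by
    intro l hl
    have a1 := hTinv l (by omega)
    have a2 := hTinv (l + 1) (by omega)
    have hb := hbraid l (by omega)
    calc T (l + 1) * (Ti l * Ti (l + 1))
        = Ti l * (Ti (l + 1) * T (l + 1)) * T l * (T (l + 1) * (Ti l * Ti (l + 1))) := by
          rw [a2.2, mul_one, a1.2, one_mul]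
      _ = Ti l * Ti (l + 1) * (T (l + 1) * (T l * T (l + 1))) * Ti l * Ti (l + 1) := by
          simp only [mul_assoc]
      _ = Ti l * Ti (l + 1) * (T l * (T (l + 1) * T l)) * Ti l * Ti (l + 1) := by rw [hb]
      _ = Ti l * Ti (l + 1) * T l * (T (l + 1) * (T l * Ti l) * Ti (l + 1)) := by
          simp only [mul_assoc]
      _ = _ := by rw [a1.1, mul_one, a2.1, mul_one]
  have hTY : ∀ k, k + 2 < n → Commute (T k) (Y (n - 1)) := by
    intro k hk
    have e1 : Y (n - 1) = piInv * aF Ti 0 (n - 1) := by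
      rw [hY, Nat.sub_self]; simp [aF]
    have e2 := aF_shift T Ti (n - 1) hbrTi hfarTi (n - 1) 0 k (by omega) (by omega) (by omega)
    rw [e1]
    show T k * (piInv * _) = piInv * _ * T k
    rw [← mul_assoc, hpiT k hk, mul_assoc, e2, mul_assoc]
  have hTYi : ∀ k, k + 2 < n → Commute (T k) (Yi (n - 1)) := by
    intro k hk
    have e := hYinv (n - 1) (by omega)
    have c := (hTY k hk).eq
    show T k * Yi (n - 1) = Yi (n - 1) * T k
    calc T k * Yi (n - 1) = Yi (n - 1) * (Y (n - 1) * T k) * Yi (n - 1) := by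
          rw [← mul_assoc, e.2, one_mul]
      _ = Yi (n - 1) * T k * (Y (n - 1) * Yi (n - 1)) := by rw [← c]; simp only [mul_assoc]
      _ = _ := by rw [e.1, mul_one]
  -- commutation with the core of `D`
  have hcore : ∀ k, k + 2 < n → Commute (T k)
      ((q - q⁻¹)⁻¹ • (XinvOp (n - 1) * (Y (n - 1) - Yi (n - 1)))) := by
    intro k hk
    exact ((hTXic k (n - 1) (by omega) (by omega) (by omega) (by omega)).mul_right
      ((hTY k hk).sub_right (hTYi k hk))).smul_right _
  have hTD : ∀ i j, i + 1 < n → j < n → j ≠ i → j ≠ i + 1 → Commute (T i) (D j) := by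
    intro i j hi hj h1 h2
    rw [hD]
    rcases lt_or_gt_of_ne h1 with h | h
    · obtain ⟨i, rfl⟩ : ∃ k, i = k + 1 := ⟨i - 1, by omega⟩
      have e1 := aF_shift T T (n - 1)
        (fun l hl => by rw [← hbraid l (by omega), mul_assoc]) hfar
        (n - 1 - j) j i (by omega) (by omega) (by omega)
      have e2 := dF_shift T (n - 1)
        (fun l hl => by rw [hbraid l (by omega), mul_assoc]) hfar
        (n - 1 - j) j i (by omega) (by omega) (by omega)
      have e3 := (hcore i (by omega)).eq
      generalize (q - q⁻¹)⁻¹ • (XinvOp (n - 1) * (Y (n - 1) - Yi (n - 1))) = C at *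
      show T (i + 1) * (_ * C * _) = _ * C * _ * T (i + 1)
      rw [← mul_assoc, ← mul_assoc, e1, mul_assoc (aF _ _ _) (T i), e3, mul_assoc, mul_assoc, e2]
      simp only [mul_assoc]
    · have hc : ∀ l, j ≤ l → l < j + (n - 1 - j) → Commute (T i) (T l) :=
        fun l h3 h4 => hfar i l (by omega) (by omega) (by omega)
      exact ((aF_commute T _ _ _ hc).mul_right (hcore i (by omega))).mul_right
        (dF_commute T _ _ _ hc)
  have hDrec : ∀ i, i + 1 < n → D i = T i * D (i + 1) * T i := by
    intro i hi
    rw [hD, hD, show n - 1 - i = (n - 1 - (i + 1)) + 1 by omega, aF_succ, dF_succ]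
    simp only [mul_assoc]
  have hXaF : ∀ (len s : ℕ), s + len < n → XOp s * aF T s len = aF Ti s len * XOp (s + len) := by
    intro len
    induction len with
    | zero => intro s _; simp [aF]
    | succ m ih =>
      intro s hs
      rw [aF_succ, aF_succ, ← mul_assoc, hXT s (by omega), mul_assoc, ih (s + 1) (by omega),
        mul_assoc, show s + 1 + m = s + (m + 1) by omega]
  refine ⟨?_, ?_, ?_, ?_⟩
  · intro i hi
    have e1 : T i * e i (i + 1) * T i = XOp (i + 1) * (Ti i * D (i + 1)) * T i := by
      rw [he, ← mul_assoc, hTX i hi]; simp only [mul_assoc]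
    have e2 : XOp (i + 1) * (D (i + 1) * T i) = (q - q⁻¹)⁻¹ •
        (aF Ti (i + 1) (n - 2 - i) * (Y (n - 1) - Yi (n - 1)) * dF T i (n - 1 - i)) := by
      rw [hD, show n - 1 - i = (n - 2 - i) + 1 by omega, dF_succ,
        show n - 1 - (i + 1) = n - 2 - i by omega]
      have e3 := hXaF (n - 2 - i) (i + 1) (by omega)
      rw [show i + 1 + (n - 2 - i) = n - 1 by omega] at e3
      simp only [mul_smul_comm, smul_mul_assoc]
      congr 1
      calc XOp (i + 1) * (aF T (i + 1) (n - 2 - i) * (XinvOp (n - 1) * (Y (n - 1) - Yi (n - 1)))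
              * dF T (i + 1) (n - 2 - i) * T i)
          = (XOp (i + 1) * aF T (i + 1) (n - 2 - i)) * XinvOp (n - 1) * (Y (n - 1) - Yi (n - 1))
              * dF T (i + 1) (n - 2 - i) * T i := by simp only [mul_assoc]
        _ = aF Ti (i + 1) (n - 2 - i) * (XOp (n - 1) * XinvOp (n - 1)) * (Y (n - 1) - Yi (n - 1))
              * dF T (i + 1) (n - 2 - i) * T i := by rw [e3]; simp only [mul_assoc]
        _ = _ := by rw [hXXi, mul_one]; simp only [mul_assoc]
    rw [e1, hTi, mul_smul, ← e2, he, hDrec i hi]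
    simp only [add_mul, mul_add, smul_mul_assoc, mul_smul_comm, one_mul, mul_assoc]
  · intro i j hi hj h1 h2
    rw [he, he, mul_assoc, mul_assoc, ← (hTD i j hi hj h1 h2).eq, ← mul_assoc (XOp i),
      hXT i hi, ← mul_assoc, ← mul_assoc, (hTinv i hi).1, one_mul]
  · intro i j hi hj h1 h2
    rw [he, he, ← mul_assoc, (hTXc i j hi hj h1 h2).eq, hDrec i hi]
    simp only [mul_assoc]
  · intro i j k hi hj hk h1 h2 h3 h4 h5
    rw [he]
    exact ((hTXc i j hi hj h1 h2).mul_right (hTD i k hi hk h3 h4)).eq.symm
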